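/- Let a sequential qubit strategy achieve the optimal witness pair W_AB = α and W_AC = (4 + √2 + √(16α − 16α² − 2))/8 for some α ∈ [1/2, (2+√2)/4]. Then each of Alice's four states is pure, i.e. each ρ_x is a rank-one projection (ρ_x² = ρ_x and tr ρ_x = 1). -/

import Mathlib

open Matrix ComplexOrder

noncomputable section

/-- The bit `x_y` of `x = (x₀, x₁)`. -/
def bit (x : Bool × Bool) (y : Bool) : Bool := if y then x.2 else x.1

/-- Alice–Bob witness `W_AB = (1/8) ∑_{x,y} tr[ρ_x K_{x_y|y}† K_{x_y|y}]`. -/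
def WAB (ρ : Bool × Bool → Matrix (Fin 2) (Fin 2) ℂ)
    (K : Bool → Bool → Matrix (Fin 2) (Fin 2) ℂ) : ℝ :=
  (1 / 8) * ∑ x : Bool × Bool, ∑ y : Bool,
    ((ρ x * ((K y (bit x y))ᴴ * K y (bit x y))).trace).re

/-- Alice–Charlie witness
`W_AC = (1/16) ∑_{x,y,b,z} tr[K_{b|y} ρ_x K_{b|y}† C_{x_z|z}]`. -/
def WAC (ρ : Bool × Bool → Matrix (Fin 2) (Fin 2) ℂ)
    (K C : Bool → Bool → Matrix (Fin 2) (Fin 2) ℂ) : ℝ :=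
  (1 / 16) * ∑ x : Bool × Bool, ∑ y : Bool, ∑ b : Bool, ∑ z : Bool,
    ((K y b * ρ x * (K y b)ᴴ * C z (bit x z)).trace).re

/-- A sequential qubit strategy: four qubit states, two instruments (Kraus
operators), and two binary POVMs. -/
def ValidStrategy (ρ : Bool × Bool → Matrix (Fin 2) (Fin 2) ℂ)
    (K C : Bool → Bool → Matrix (Fin 2) (Fin 2) ℂ) : Prop :=
  (∀ x, (ρ x).PosSemidef ∧ (ρ x).trace = 1) ∧
  (∀ y, (K y false)ᴴ * K y false + (K y true)ᴴ * K y true = 1) ∧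
  (∀ z b, (C z b).PosSemidef) ∧
  (∀ z, C z false + C z true = 1)

section Abstract
open RealInnerProductSpace

/-- Scalar core: reverse Minkowski. -/
lemma rev_mink (x0 x1 p0 p1 Q : ℝ) (hp0 : 0 ≤ p0) (hp1 : 0 ≤ p1) (hQ : 0 ≤ Q)
    
    (h0 : x0 ^ 2 = p0 ^ 2 - Q) (h1 : x1 ^ 2 = p1 ^ 2 - Q) :
    x0 + x1 ≤ √((p0 + p1) ^ 2 - 4 * Q) := by
  apply Real.le_sqrt_of_sq_le
  have hq : √Q ^ 2 = Q := Real.sq_sqrt hQ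
  have hq0 : √Q ≤ p0 := by
    apply abs_le_of_sq_le_sq' _ hp0 |>.2
    nlinarith [sq_nonneg x0]
  have hq1 : √Q ≤ p1 := by
    apply abs_le_of_sq_le_sq' _ hp1 |>.2
    nlinarith [sq_nonneg x1]
  have hpp : Q ≤ p0 * p1 := by
    have := mul_le_mul hq0 hq1 (Real.sqrt_nonneg _) hp0
    nlinarith
  have : x0 * x1 ≤ p0 * p1 - Q := by
    apply abs_le_of_sq_le_sq' _ (by linarith) |>.2
    rw [mul_pow, h0, h1]
    nlinarith [mul_nonneg hQ (sq_nonneg (p0 - p1))]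
  nlinarith

lemma cs2 (a b x y : ℝ) : a * x + b * y ≤ √(a ^ 2 + b ^ 2) * √(x ^ 2 + y ^ 2) := by
  rw [← Real.sqrt_mul (by positivity)]
  apply Real.le_sqrt_of_sq_le
  nlinarith [sq_nonneg (a * y - b * x)]

variable {E : Type*} [NormedAddCommGroup E] [InnerProductSpace ℝ E]

/-- The bound on the shrinking of Bloch vectors. -/
def NN (b r : E) : ℝ := ‖r‖ ^ 2 - ‖b‖ ^ 2 * ‖r‖ ^ 2 + ⟪b, r⟫ ^ 2

lemma sqrt_NN_le (b r : E) : √(NN b r) ≤ ‖r‖ := by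
  apply Real.sqrt_le_iff.2 ⟨norm_nonneg _, ?_⟩
  have h := abs_real_inner_le_norm b r
  have h2 : ⟪b, r⟫ ^ 2 ≤ (‖b‖ * ‖r‖) ^ 2 := by
    rw [← sq_abs]; gcongr
  unfold NN
  nlinarith

lemma bessel2 (b r q : E) (h : ⟪r, q⟫ = 0) :
    ⟪b, r⟫ ^ 2 * ‖q‖ ^ 2 + ⟪b, q⟫ ^ 2 * ‖r‖ ^ 2 ≤ ‖b‖ ^ 2 * ‖r‖ ^ 2 * ‖q‖ ^ 2 := by
  rcases eq_or_ne r 0 with rfl | hr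
  · simp
  rcases eq_or_ne q 0 with rfl | hq
  · simp
  have h1 : 0 < ‖r‖ ^ 2 := by positivity
  have h2 : 0 < ‖q‖ ^ 2 := by positivity
  have key : 0 ≤ ‖b - ((⟪b, r⟫ / ‖r‖ ^ 2) • r + (⟪b, q⟫ / ‖q‖ ^ 2) • q)‖ ^ 2 := sq_nonneg _
  rw [norm_sub_sq_real, norm_add_sq_real, inner_add_right] at key
  simp only [inner_smul_left, inner_smul_right, norm_smul, mul_pow, h, Real.norm_eq_abs, sq_abs]
    at key
  simp only [RCLike.conj_to_real] at key
  have e : ‖b‖ ^ 2 * ‖r‖ ^ 2 * ‖q‖ ^ 2 - (⟪b, r⟫ ^ 2 * ‖q‖ ^ 2 + ⟪b, q⟫ ^ 2 * ‖r‖ ^ 2)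
      = (‖r‖ ^ 2 * ‖q‖ ^ 2) * (‖b‖ ^ 2 - ⟪b, r⟫ ^ 2 / ‖r‖ ^ 2 - ⟪b, q⟫ ^ 2 / ‖q‖ ^ 2) := by
    field_simp
    ring
  have e2 : 0 ≤ ‖b‖ ^ 2 - ⟪b, r⟫ ^ 2 / ‖r‖ ^ 2 - ⟪b, q⟫ ^ 2 / ‖q‖ ^ 2 := by
    refine key.trans (le_of_eq ?_)
    field_simp
    ring
  have := mul_nonneg (mul_pos h1 h2).le e2
  linarith

lemma one_side (b r q : E) (hb : ‖b‖ ≤ 1) (h : ⟪r, q⟫ = 0) (c s : ℝ) (hc : 0 ≤ c) :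
    c * (√(NN b r) + √(NN b q)) + s * ⟪b, r⟫
      ≤ c * ‖r‖ + √(c ^ 2 * ‖q‖ ^ 2 + s ^ 2 * ‖r‖ ^ 2) := by
  have h1 := mul_le_mul_of_nonneg_left (sqrt_NN_le b r) hc
  have h2 : c * √(NN b q) + s * ⟪b, r⟫ ≤ √(c ^ 2 * ‖q‖ ^ 2 + s ^ 2 * ‖r‖ ^ 2) := by
    rcases eq_or_ne r 0 with rfl | hr
    · simp only [inner_zero_right, norm_zero]
      have := mul_le_mul_of_nonneg_left (sqrt_NN_le b q) hc
      have e : √(c ^ 2 * ‖q‖ ^ 2 + s ^ 2 * 0 ^ 2) = c * ‖q‖ := by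
        rw [show c ^ 2 * ‖q‖ ^ 2 + s ^ 2 * 0 ^ 2 = (c * ‖q‖) ^ 2 by ring]
        exact Real.sqrt_sq (by positivity)
      rw [e]; linarith
    have hr0 : 0 < ‖r‖ := by positivity
    set p := ⟪b, r⟫ / ‖r‖ with hp
    have hP : ⟪b, r⟫ = ‖r‖ * p := by rw [hp]; field_simp
    have hp1 : p ^ 2 ≤ 1 := by
      have h := abs_real_inner_le_norm b r
      have h3 : |p| ≤ 1 := by
        rw [hp, abs_div, abs_of_pos hr0, div_le_one hr0]
        nlinarith
      rw [← sq_abs]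
      nlinarith [abs_nonneg p]
    have hN : NN b q ≤ ‖q‖ ^ 2 * (1 - p ^ 2) := by
      have hB := bessel2 b r q h
      rw [hP] at hB
      unfold NN
      have : (p ^ 2 * ‖q‖ ^ 2 + ⟪b, q⟫ ^ 2) * ‖r‖ ^ 2 ≤ (‖b‖ ^ 2 * ‖q‖ ^ 2) * ‖r‖ ^ 2 := by
        nlinarith
      have := le_of_mul_le_mul_right this (by positivity)
      nlinarith
    have hs : √(NN b q) ≤ ‖q‖ * √(1 - p ^ 2) := by
      refine (Real.sqrt_le_sqrt hN).trans (le_of_eq ?_)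
      rw [Real.sqrt_mul (by positivity), Real.sqrt_sq (norm_nonneg _)]
    have := cs2 (c * ‖q‖) (s * ‖r‖) (√(1 - p ^ 2)) p
    rw [Real.sq_sqrt (by linarith), show 1 - p ^ 2 + p ^ 2 = 1 by ring, Real.sqrt_one, mul_one,
      mul_pow, mul_pow] at this
    have := mul_le_mul_of_nonneg_left hs hc
    rw [hP]
    nlinarith
  nlinarith

lemma both_sides (a00 a01 a10 a11 b0 b1 : E)
    (k00 : ∀ r, ⟪a00, r⟫ ≤ √(NN b0 r)) (k01 : ∀ r, ⟪a01, r⟫ ≤ √(NN b0 r))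
    (k10 : ∀ r, ⟪a10, r⟫ ≤ √(NN b1 r)) (k11 : ∀ r, ⟪a11, r⟫ ≤ √(NN b1 r))
    (hb0 : ‖b0‖ ≤ 1) (hb1 : ‖b1‖ ≤ 1) (c s : ℝ) (hc : 0 ≤ c) (hcs : s ^ 2 + c ^ 2 = 1)
    (u v : E) (hu : ‖u‖ = 1) (hv : ‖v‖ = 1) :
    c * (⟪a00, u + v⟫ + ⟪a01, u - v⟫ + ⟪a10, u + v⟫ + ⟪a11, u - v⟫)
      + s * (⟪b0, u + v⟫ + ⟪b1, u - v⟫) ≤ 2 * √2 * (1 + c) := by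
  have horth : ⟪u + v, u - v⟫ = 0 := by
    rw [inner_add_left, inner_sub_right, inner_sub_right, real_inner_comm u v]
    simp [hu, hv]
  have hpar : ‖u + v‖ ^ 2 + ‖u - v‖ ^ 2 = 4 := by
    rw [norm_add_sq_real, norm_sub_sq_real, hu, hv]; ring
  have horth' : ⟪u - v, u + v⟫ = 0 := by rw [real_inner_comm]; exact horth
  generalize u + v = r0 at *
  generalize u - v = r1 at *
  have s0 := one_side b0 r0 r1 hb0 horth c s hc
  have s1 := one_side b1 r1 r0 hb1 horth' c s hc
  have h22 : (√2) ^ 2 = 2 := Real.sq_sqrt (by norm_num)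
  have hs4 : √(4 : ℝ) = 2 := by
    rw [show (4 : ℝ) = 2 ^ 2 by norm_num]; exact Real.sqrt_sq (by norm_num)
  have hsum : ‖r0‖ + ‖r1‖ ≤ 2 * √2 := by
    have := cs2 1 1 ‖r0‖ ‖r1‖
    rw [hpar, hs4] at this
    norm_num at this
    linarith
  have hsq : √(c ^ 2 * ‖r1‖ ^ 2 + s ^ 2 * ‖r0‖ ^ 2) + √(c ^ 2 * ‖r0‖ ^ 2 + s ^ 2 * ‖r1‖ ^ 2)
      ≤ 2 * √2 := by
    have := cs2 1 1 (√(c ^ 2 * ‖r1‖ ^ 2 + s ^ 2 * ‖r0‖ ^ 2))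
      (√(c ^ 2 * ‖r0‖ ^ 2 + s ^ 2 * ‖r1‖ ^ 2))
    rw [Real.sq_sqrt (by positivity), Real.sq_sqrt (by positivity),
      show c ^ 2 * ‖r1‖ ^ 2 + s ^ 2 * ‖r0‖ ^ 2 + (c ^ 2 * ‖r0‖ ^ 2 + s ^ 2 * ‖r1‖ ^ 2)
        = (s ^ 2 + c ^ 2) * (‖r0‖ ^ 2 + ‖r1‖ ^ 2) by ring, hpar, hcs, one_mul (4 : ℝ), hs4] at this
    norm_num at this
    linarith
  have A := mul_le_mul_of_nonneg_left
    (add_le_add (add_le_add (k00 r0) (k01 r1)) (add_le_add (k10 r0) (k11 r1))) hc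
  have B := mul_le_mul_of_nonneg_left hsum hc
  linarith

lemma diag_lt (a00 a01 a10 a11 b0 b1 : E)
    (k00 : ∀ r, ⟪a00, r⟫ ≤ √(NN b0 r)) (k10 : ∀ r, ⟪a10, r⟫ ≤ √(NN b1 r))
    (hb0 : ‖b0‖ ≤ 1) (c s : ℝ) (hc : 0 ≤ c) (hs : 0 ≤ s)
    (hcs : s ^ 2 + c ^ 2 = 1) (w : E) (hw : ‖w‖ = 1) :
    c * (⟪a00, w + w⟫ + ⟪a01, w - w⟫ + ⟪a10, w + w⟫ + ⟪a11, w - w⟫)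
      + s * (⟪b0, w + w⟫ + ⟪b1, w - w⟫) < 2 * √2 * (1 + c) := by
  have h22 : (√2) ^ 2 = 2 := Real.sq_sqrt (by norm_num)
  have h2 : 1.414 < √2 := by apply Real.lt_sqrt_of_sq_lt; norm_num
  have hn : ‖w + w‖ = 2 := by rw [← two_smul ℝ w, norm_smul, hw]; norm_num
  simp only [sub_self, inner_zero_right, add_zero]
  have A := (k00 (w + w)).trans (sqrt_NN_le _ _)
  have B := (k10 (w + w)).trans (sqrt_NN_le _ _)
  have C := real_inner_le_norm b0 (w + w)
  rw [hn] at A B C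
  have A' := mul_le_mul_of_nonneg_left (add_le_add A B) hc
  have C' := mul_le_mul_of_nonneg_left (C.trans (mul_le_mul_of_nonneg_right hb0 (by norm_num))) hs
  have D : 4 * c + 2 * s < 2 * 1.414 * (1 + c) := by
    nlinarith [sq_nonneg (c - 0.5), sq_nonneg (s - 0.86)]
  nlinarith

theorem abstract_main (a00 a01 a10 a11 b0 b1 : E) (hne : ∃ w : E, ‖w‖ = 1)
    (k00 : ∀ r, ⟪a00, r⟫ ≤ √(NN b0 r)) (k01 : ∀ r, ⟪a01, r⟫ ≤ √(NN b0 r))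
    (k10 : ∀ r, ⟪a10, r⟫ ≤ √(NN b1 r)) (k11 : ∀ r, ⟪a11, r⟫ ≤ √(NN b1 r))
    (hb0 : ‖b0‖ ≤ 1) (hb1 : ‖b1‖ ≤ 1) (c s : ℝ) (hc : 0 ≤ c) (hs : 0 ≤ s)
    (hcs : s ^ 2 + c ^ 2 = 1)
    (u v : E) (hu : ‖u‖ ≤ 1) (hv : ‖v‖ ≤ 1)
    (hX : ⟪a00, u + v⟫ + ⟪a01, u - v⟫ + ⟪a10, u + v⟫ + ⟪a11, u - v⟫ = 2 * √2 * (1 + c))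
    (hY : ⟪b0, u + v⟫ + ⟪b1, u - v⟫ = 2 * √2 * s) : ‖u‖ = 1 ∧ ‖v‖ = 1 := by
  have hS := both_sides a00 a01 a10 a11 b0 b1 k00 k01 k10 k11 hb0 hb1 c s hc hcs
  have hD := diag_lt a00 a01 a10 a11 b0 b1 k00 k10 hb0 c s hc hs hcs
  have hM : 0 < 2 * √2 * (1 + c) := by positivity
  have hval : c * (⟪a00, u + v⟫ + ⟪a01, u - v⟫ + ⟪a10, u + v⟫ + ⟪a11, u - v⟫)
      + s * (⟪b0, u + v⟫ + ⟪b1, u - v⟫) = 2 * √2 * (1 + c) := by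
    rw [hX, hY]; linear_combination 2 * √2 * hcs
  generalize 2 * √2 * (1 + c) = M at hS hD hM hval
  set F : E := c • (a00 + a01 + a10 + a11) + s • (b0 + b1) with hF
  set G : E := c • (a00 - a01 + a10 - a11) + s • (b0 - b1) with hG
  have hL : ∀ u v : E, c * (⟪a00, u + v⟫ + ⟪a01, u - v⟫ + ⟪a10, u + v⟫ + ⟪a11, u - v⟫)
      + s * (⟪b0, u + v⟫ + ⟪b1, u - v⟫) = ⟪F, u⟫ + ⟪G, v⟫ := by
    intro u v
    simp only [hF, hG, inner_add_left, inner_sub_left, inner_add_right, inner_sub_right,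
      real_inner_smul_left]
    ring
  rw [hL] at hval
  simp only [hL] at hS hD
  have hdir : ∀ F : E, ∃ w : E, ‖w‖ = 1 ∧ ⟪F, w⟫ = ‖F‖ := by
    intro F
    rcases eq_or_ne F 0 with rfl | h
    · obtain ⟨w, hw⟩ := hne
      exact ⟨w, hw, by simp⟩
    · have : ‖F‖ ≠ 0 := norm_ne_zero_iff.2 h
      refine ⟨‖F‖⁻¹ • F, ?_, ?_⟩
      · rw [norm_smul, norm_inv, norm_norm]; field_simp
      · rw [real_inner_smul_right, real_inner_self_eq_norm_sq]; field_simp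
  obtain ⟨f, hf1, hf⟩ := hdir F
  obtain ⟨g, hg1, hg⟩ := hdir G
  have h1 := hS f g hf1 hg1
  rw [hf, hg] at h1
  have hFu := real_inner_le_norm F u
  have hGv := real_inner_le_norm G v
  have nF := norm_nonneg F
  have nG := norm_nonneg G
  have hFu' : ‖F‖ * ‖u‖ ≤ ‖F‖ := by nlinarith
  have hGv' : ‖G‖ * ‖v‖ ≤ ‖G‖ := by nlinarith
  have hF0 : F ≠ 0 := by
    intro h
    have := hD g hg1
    rw [hg, h, inner_zero_left] at this
    rw [h] at hFu hFu'
    simp at hFu hFu'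
    rw [h, inner_zero_left] at hval
    linarith
  have hG0 : G ≠ 0 := by
    intro h
    have := hD f hf1
    rw [hf, h, inner_zero_left] at this
    rw [h, inner_zero_left] at hval
    linarith
  have pF : 0 < ‖F‖ := by positivity
  have pG : 0 < ‖G‖ := by positivity
  constructor
  · apply le_antisymm hu
    have : ‖F‖ * 1 ≤ ‖F‖ * ‖u‖ := by linarith
    exact le_of_mul_le_mul_left this pF
  · apply le_antisymm hv
    have : ‖G‖ * 1 ≤ ‖G‖ * ‖v‖ := by linarith
    exact le_of_mul_le_mul_left this pG

end Abstract

section Bloch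
open RealInnerProductSpace

abbrev M2 := Matrix (Fin 2) (Fin 2) ℂ
abbrev R3 := EuclideanSpace ℝ (Fin 3)

/-- Half the trace. -/
def ht (A : M2) : ℝ := ((A 0 0).re + (A 1 1).re) / 2

/-- Bloch vector. -/
def bl (A : M2) : R3 := !₂[(A 0 1).re, (A 0 1).im, ((A 0 0).re - (A 1 1).re) / 2]

/-- Traceless Hermitian matrix with a given Bloch vector. -/
def sg (r : R3) : M2 := !![(r 2 : ℂ), (r 0 : ℂ) + (r 1 : ℂ) * Complex.I;
  (r 0 : ℂ) - (r 1 : ℂ) * Complex.I, -(r 2 : ℂ)]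

lemma inner_R3 (a b : R3) : ⟪a, b⟫ = a 0 * b 0 + a 1 * b 1 + a 2 * b 2 := by
  simp [PiLp.inner_apply, Fin.sum_univ_three]; ring

lemma normsq_R3 (a : R3) : ‖a‖ ^ 2 = a 0 ^ 2 + a 1 ^ 2 + a 2 ^ 2 := by
  rw [← real_inner_self_eq_norm_sq, inner_R3]; ring

lemma ht_add (A B : M2) : ht (A + B) = ht A + ht B := by simp [ht]; ring
lemma ht_sub (A B : M2) : ht (A - B) = ht A - ht B := by simp [ht]; ring
lemma bl_add (A B : M2) : bl (A + B) = bl A + bl B := by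
  ext i; fin_cases i <;> simp [bl]; ring
lemma bl_sub (A B : M2) : bl (A - B) = bl A - bl B := by
  ext i; fin_cases i <;> simp [bl]; ring
lemma ht_one : ht 1 = 1 := by simp [ht]
lemma bl_one : bl 1 = 0 := by
  ext i; fin_cases i <;> simp [bl]
lemma ht_sg (r : R3) : ht (sg r) = 0 := by simp [ht, sg]
lemma bl_sg (r : R3) : bl (sg r) = r := by
  ext i; fin_cases i <;> simp [bl, sg]
lemma sg_herm (r : R3) : (sg r).IsHermitian := by
  ext i j; fin_cases i <;> fin_cases j <;> simp [sg, Complex.ext_iff]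

lemma herm_entries {A : M2} (h : A.IsHermitian) :
    (A 0 0).im = 0 ∧ (A 1 1).im = 0 ∧ (A 1 0).re = (A 0 1).re ∧ (A 1 0).im = -(A 0 1).im := by
  have h0 := congrArg Complex.im (h.apply 0 0)
  have h1 := congrArg Complex.im (h.apply 1 1)
  have h2 := congrArg Complex.re (h.apply 1 0)
  have h3 := congrArg Complex.im (h.apply 1 0)
  simp at h0 h1 h2 h3
  refine ⟨by linarith, by linarith, by linarith, by linarith⟩

lemma tr_mul_herm {A B : M2} (hA : A.IsHermitian) (hB : B.IsHermitian) :
    (A * B).trace.re = 2 * (ht A * ht B + ⟪bl A, bl B⟫) := by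
  obtain ⟨a1, a2, a3, a4⟩ := herm_entries hA
  obtain ⟨b1, b2, b3, b4⟩ := herm_entries hB
  rw [inner_R3]
  simp [Matrix.trace, Matrix.mul_apply, Fin.sum_univ_two, ht, bl, a1, a2, a3, a4, b1, b2, b3, b4]
  ring

lemma det_herm {A : M2} (hA : A.IsHermitian) : A.det.re = ht A ^ 2 - ‖bl A‖ ^ 2 := by
  obtain ⟨a1, a2, a3, a4⟩ := herm_entries hA
  rw [normsq_R3, Matrix.det_fin_two]
  simp [ht, bl, a1, a2, a3, a4]
  ring

lemma ht_trace (A : M2) : A.trace.re = 2 * ht A := by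
  simp [Matrix.trace, Fin.sum_univ_two, ht]; ring

lemma psd_bl {A : M2} (h : A.PosSemidef) : 0 ≤ ht A ∧ ‖bl A‖ ≤ ht A := by
  have h1 : 0 ≤ ht A := by
    have := (Complex.le_def.1 h.trace_nonneg).1
    rw [ht_trace] at this
    simp at this
    linarith
  refine ⟨h1, ?_⟩
  have h2 := (Complex.le_def.1 h.det_nonneg).1
  rw [det_herm h.1] at h2
  simp at h2
  exact abs_le_of_sq_le_sq' h2 h1 |>.2

/-- Bob's instrument for a fixed setting. -/
lemma channel_bound (K0 K1 D : M2) (hK : K0ᴴ * K0 + K1ᴴ * K1 = 1) (hD : D.IsHermitian)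
    (hd : ‖bl D‖ ≤ 1) (r : R3) :
    ⟪bl (K0ᴴ * D * K0 + K1ᴴ * D * K1), r⟫ ≤ √(NN (bl (K0ᴴ * K0 - K1ᴴ * K1)) r) := by
  have hE : ∀ K : M2, (Kᴴ * K).IsHermitian := fun K => Matrix.isHermitian_conjTranspose_mul_self K
  have hH : ∀ K : M2, (K * sg r * Kᴴ).IsHermitian := fun K =>
    Matrix.isHermitian_mul_mul_conjTranspose K (sg_herm r)
  have hA : ∀ K : M2, (Kᴴ * D * K).IsHermitian := fun K =>
    Matrix.isHermitian_conjTranspose_mul_mul K hD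
  -- Heisenberg versus Schroedinger
  have hdual : ∀ K : M2, ⟪bl (Kᴴ * D * K), r⟫ =
      ht (K * sg r * Kᴴ) * ht D + ⟪bl (K * sg r * Kᴴ), bl D⟫ := by
    intro K
    have e1 := tr_mul_herm (hA K) (sg_herm r)
    have e2 := tr_mul_herm (hH K) hD
    have e3 : (Kᴴ * D * K * sg r).trace = (K * sg r * Kᴴ * D).trace := by
      rw [show Kᴴ * D * K * sg r = (Kᴴ * D) * (K * sg r) by simp only [Matrix.mul_assoc],
        Matrix.trace_mul_comm]
      simp only [Matrix.mul_assoc]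
    rw [e3, e2, ht_sg, bl_sg] at e1
    linarith
  have htau : ∀ K : M2, ht (K * sg r * Kᴴ) = ⟪bl (Kᴴ * K), r⟫ := by
    intro K
    have e1 := tr_mul_herm (hE K) (sg_herm r)
    have e3 : (Kᴴ * K * sg r).trace = (K * sg r * Kᴴ).trace := by
      rw [Matrix.mul_assoc, Matrix.trace_mul_comm]
    rw [e3, ht_trace, ht_sg, bl_sg] at e1
    linarith
  have hnorm : ∀ K : M2, ‖bl (K * sg r * Kᴴ)‖ ^ 2 =
      ⟪bl (Kᴴ * K), r⟫ ^ 2 + (ht (Kᴴ * K) ^ 2 - ‖bl (Kᴴ * K)‖ ^ 2) * ‖r‖ ^ 2 := by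
    intro K
    have e1 := det_herm (hH K)
    have e2 := det_herm (hE K)
    have e4 := det_herm (sg_herm r)
    rw [ht_sg, bl_sg] at e4
    have e5 : (Kᴴ * K).det.im = 0 := by
      simp [Matrix.det_mul, Matrix.det_conjTranspose]; ring
    have e3 : (K * sg r * Kᴴ).det = (Kᴴ * K).det * (sg r).det := by
      simp only [Matrix.det_mul]; ring
    rw [e3, Complex.mul_re, e5, e2, e4, htau] at e1
    linarith
  have ht1 : ht (K0ᴴ * K0) + ht (K1ᴴ * K1) = 1 := by rw [← ht_add, hK, ht_one]
  have hb1 : bl (K0ᴴ * K0) + bl (K1ᴴ * K1) = 0 := by rw [← bl_add, hK, bl_one]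
  have p0 := (psd_bl (Matrix.posSemidef_conjTranspose_mul_self K0)).1
  have p1 := (psd_bl (Matrix.posSemidef_conjTranspose_mul_self K1)).1
  have n0 := hnorm K0
  have n1 := hnorm K1
  have t0 := htau K0
  have t1 := htau K1
  have hb1' : bl (K1ᴴ * K1) = - bl (K0ᴴ * K0) := by
    rw [eq_neg_iff_add_eq_zero, add_comm]; exact hb1
  rw [bl_add, inner_add_left, hdual, hdual, t0, t1, bl_sub]
  rw [hb1', norm_neg, inner_neg_left, neg_sq] at n1
  rw [hb1', inner_neg_left]
  generalize bl (K0ᴴ * K0) = e at *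
  generalize ht (K0ᴴ * K0) = τ0 at *
  generalize ht (K1ᴴ * K1) = τ1 at *
  generalize bl (K0 * sg r * K0ᴴ) = h0 at *
  generalize bl (K1 * sg r * K1ᴴ) = h1 at *
  have hQ : 0 ≤ ‖e‖ ^ 2 * ‖r‖ ^ 2 - ⟪e, r⟫ ^ 2 := by
    have h2 : ⟪e, r⟫ ^ 2 ≤ (‖e‖ * ‖r‖) ^ 2 := by
      rw [← sq_abs]; gcongr; exact abs_real_inner_le_norm e r
    nlinarith
  have R := rev_mink ‖h0‖ ‖h1‖ (τ0 * ‖r‖) (τ1 * ‖r‖) _ (by positivity) (by positivity) hQ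
    (by rw [n0]; ring) (by rw [n1]; ring)
  have hNN : NN (e - -e) r = (τ0 * ‖r‖ + τ1 * ‖r‖) ^ 2 - 4 * (‖e‖ ^ 2 * ‖r‖ ^ 2 - ⟪e, r⟫ ^ 2) := by
    rw [← add_mul, ht1, sub_neg_eq_add, ← two_smul ℝ e, NN, norm_smul, real_inner_smul_left]
    norm_num
    ring
  rw [hNN]
  have c0 := real_inner_le_norm h0 (bl D)
  have c1 := real_inner_le_norm h1 (bl D)
  have d0 := mul_le_mul_of_nonneg_left hd (norm_nonneg h0)
  have d1 := mul_le_mul_of_nonneg_left hd (norm_nonneg h1)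
  linarith

lemma b_norm (K0 K1 : M2) (hK : K0ᴴ * K0 + K1ᴴ * K1 = 1) :
    ‖bl (K0ᴴ * K0 - K1ᴴ * K1)‖ ≤ 1 := by
  have ht1 : ht (K0ᴴ * K0) + ht (K1ᴴ * K1) = 1 := by rw [← ht_add, hK, ht_one]
  have p0 := (psd_bl (Matrix.posSemidef_conjTranspose_mul_self K0)).2
  have p1 := (psd_bl (Matrix.posSemidef_conjTranspose_mul_self K1)).2
  rw [bl_sub]
  have := norm_sub_le (bl (K0ᴴ * K0)) (bl (K1ᴴ * K1))
  linarith

lemma d_norm (C0 C1 : M2) (h0 : C0.PosSemidef) (h1 : C1.PosSemidef) (hC : C0 + C1 = 1) :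
    ‖bl (C0 - C1)‖ ≤ 1 := by
  have ht1 : ht C0 + ht C1 = 1 := by rw [← ht_add, hC, ht_one]
  have p0 := (psd_bl h0).2
  have p1 := (psd_bl h1).2
  rw [bl_sub]
  have := norm_sub_le (bl C0) (bl C1)
  linarith

lemma pure_of_norm {A : M2} (h : A.PosSemidef) (ht1 : A.trace = 1) (hn : ‖bl A‖ = 1 / 2) :
    A * A = A := by
  obtain ⟨a1, a2, a3, a4⟩ := herm_entries h.1
  have hn2 : ‖bl A‖ ^ 2 = 1 / 4 := by rw [hn]; norm_num
  rw [normsq_R3] at hn2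
  have htr := congrArg Complex.re ht1
  simp [Matrix.trace, Fin.sum_univ_two] at htr
  simp [bl] at hn2
  have e11 : (A 1 1).re = 1 - (A 0 0).re := by linarith
  rw [e11] at hn2
  ext i j
  fin_cases i <;> fin_cases j <;>
    simp [Matrix.mul_apply, Fin.sum_univ_two, Complex.ext_iff, a1, a2, a3, a4, e11] <;>
    (try constructor) <;> nlinarith

lemma sum_E (A E0 E1 : M2) (hA : A.IsHermitian) (ht1 : ht A = 1 / 2) (hE : E0 + E1 = 1)
    (h0 : E0.IsHermitian) (h1 : E1.IsHermitian) :
    (A * E0).trace.re = ht E0 + ⟪bl A, bl (E0 - E1)⟫ ∧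
    (A * E1).trace.re = ht E1 - ⟪bl A, bl (E0 - E1)⟫ := by
  have hb1 : bl E0 + bl E1 = 0 := by rw [← bl_add, hE, bl_one]
  have hb1' : bl E1 = - bl E0 := by
    rw [eq_neg_iff_add_eq_zero, add_comm]; exact hb1
  rw [tr_mul_herm hA h0, tr_mul_herm hA h1, ht1, bl_sub, hb1']
  simp only [inner_sub_right, inner_neg_right]
  constructor <;> ring

lemma pure_pair {A B : M2} (hA : A.PosSemidef) (tA : A.trace = 1)
    (hB : B.PosSemidef) (tB : B.trace = 1) :
    ‖bl A - bl B‖ ≤ 1 ∧ (‖bl A - bl B‖ = 1 → A * A = A ∧ B * B = B) := by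
  have hA1 : ht A = 1 / 2 := by
    have := ht_trace A; rw [tA] at this; simp at this; linarith
  have hB1 : ht B = 1 / 2 := by
    have := ht_trace B; rw [tB] at this; simp at this; linarith
  have p := (psd_bl hA).2
  have q := (psd_bl hB).2
  have := norm_sub_le (bl A) (bl B)
  refine ⟨by linarith, fun h => ⟨pure_of_norm hA tA ?_, pure_of_norm hB tB ?_⟩⟩ <;> linarith

/-- Charlie's effect pulled back through Bob's instrument. -/
def heis (K0 K1 D : M2) : M2 := K0ᴴ * D * K0 + K1ᴴ * D * K1

lemma heis_trace (K0 K1 D A : M2) :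
    (K0 * A * K0ᴴ * D).trace.re + (K1 * A * K1ᴴ * D).trace.re = (A * heis K0 K1 D).trace.re := by
  have e3 : ∀ K : M2, (A * (Kᴴ * D * K)).trace = (K * A * Kᴴ * D).trace := by
    intro K
    rw [← Matrix.mul_assoc, Matrix.trace_mul_comm]
    simp only [Matrix.mul_assoc]
  rw [heis, Matrix.mul_add, Matrix.trace_add, e3, e3, Complex.add_re]

lemma heis_herm (K0 K1 D : M2) (hD : D.IsHermitian) : (heis K0 K1 D).IsHermitian :=
  (Matrix.isHermitian_conjTranspose_mul_mul K0 hD).add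
    (Matrix.isHermitian_conjTranspose_mul_mul K1 hD)

lemma heis_add (K0 K1 D D' : M2) : heis K0 K1 (D + D') = heis K0 K1 D + heis K0 K1 D' := by
  simp only [heis, Matrix.mul_add, Matrix.add_mul]; abel

lemma heis_sub (K0 K1 D D' : M2) : heis K0 K1 (D - D') = heis K0 K1 D - heis K0 K1 D' := by
  simp only [heis, Matrix.mul_sub, Matrix.sub_mul]; abel

end Bloch

/-- Result 2 (purity of Alice's states): a strategy achieving the optimal
witness pair has all four preparations pure, i.e. rank-one projections. -/
theorem selftest_states_pure
    (ρ : Bool × Bool → Matrix (Fin 2) (Fin 2) ℂ)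
    (K C : Bool → Bool → Matrix (Fin 2) (Fin 2) ℂ)
    (hvalid : ValidStrategy ρ K C)
    (α : ℝ) (hα : α ∈ Set.Icc (1 / 2 : ℝ) ((2 + Real.sqrt 2) / 4))
    (hAB : WAB ρ K = α)
    (hAC : WAC ρ K C = (4 + Real.sqrt 2 + Real.sqrt (16 * α - 16 * α ^ 2 - 2)) / 8) :
    ∀ x : Bool × Bool, ρ x * ρ x = ρ x ∧ (ρ x).trace = 1 := by
  obtain ⟨hρ, hK, hC, hC1⟩ := hvalid
  have hht : ∀ x, ht (ρ x) = 1 / 2 := by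
    intro x
    have := ht_trace (ρ x); rw [(hρ x).2] at this; simp at this; linarith
  obtain ⟨hu, hu'⟩ := pure_pair (hρ (false, false)).1 (hρ (false, false)).2
    (hρ (true, true)).1 (hρ (true, true)).2
  obtain ⟨hv, hv'⟩ := pure_pair (hρ (false, true)).1 (hρ (false, true)).2
    (hρ (true, false)).1 (hρ (true, false)).2
  have hDh : ∀ z, (C z false - C z true).IsHermitian := fun z => (hC z false).1.sub (hC z true).1
  have hDn : ∀ z, ‖bl (C z false - C z true)‖ ≤ 1 := fun z =>
    d_norm _ _ (hC z false) (hC z true) (hC1 z)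
  have key := fun y z => channel_bound (K y false) (K y true) (C z false - C z true) (hK y)
    (hDh z) (hDn z)
  have hB : ∀ x y, _ := fun x y => sum_E (ρ x) _ _ (hρ x).1.1 (hht x) (hK y)
    (Matrix.isHermitian_conjTranspose_mul_self _) (Matrix.isHermitian_conjTranspose_mul_self _)
  have hheis1 : ∀ y z, heis (K y false) (K y true) (C z false)
      + heis (K y false) (K y true) (C z true) = 1 := by
    intro y z
    rw [← heis_add, hC1]
    simp only [heis, Matrix.mul_one]
    exact hK y
  have hCC : ∀ x y z, _ := fun x y z => sum_E (ρ x) _ _ (hρ x).1.1 (hht x) (hheis1 y z)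
    (heis_herm _ _ _ (hC z false).1) (heis_herm _ _ _ (hC z true).1)
  have ht1 : ∀ y, ht ((K y false)ᴴ * K y false) + ht ((K y true)ᴴ * K y true) = 1 := by
    intro y; rw [← ht_add, hK, ht_one]
  have ht2 : ∀ y z, ht (heis (K y false) (K y true) (C z false))
      + ht (heis (K y false) (K y true) (C z true)) = 1 := by
    intro y z; rw [← ht_add, hheis1, ht_one]
  have hAC' : WAC ρ K C = (1 / 16) * ∑ x : Bool × Bool, ∑ y : Bool, ∑ z : Bool,
      ((ρ x * heis (K y false) (K y true) (C z (bit x z))).trace).re := by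
    unfold WAC
    congr 1
    refine Finset.sum_congr rfl fun x _ => Finset.sum_congr rfl fun y _ => ?_
    rw [Finset.sum_comm]
    refine Finset.sum_congr rfl fun z _ => ?_
    rw [Fintype.sum_bool, add_comm]
    exact heis_trace _ _ _ _
  rw [hAC'] at hAC
  simp only [← heis_sub] at hCC
  have hh : ∀ y z, bl (heis (K y false) (K y true) (C z false - C z true)) = bl
    ((K y false)ᴴ * (C z false - C z true) * K y false
      + (K y true)ᴴ * (C z false - C z true) * K y true) := fun _ _ => rfl
  simp only [← hh] at key
  unfold WAB at hAB
  simp only [Fintype.sum_prod_type, Fintype.sum_bool, bit, if_true, if_false,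
    Bool.false_eq_true, (hB _ _).1, (hB _ _).2, (hCC _ _ _).1, (hCC _ _ _).2] at hAB hAC
  have hbn := fun y => b_norm (K y false) (K y true) (hK y)
  have q0 := ht1 false
  have q1 := ht1 true
  have w00 := ht2 false false
  have w01 := ht2 false true
  have w10 := ht2 true false
  have w11 := ht2 true true
  have h22 : (√2) ^ 2 = 2 := Real.sq_sqrt (by norm_num)
  obtain ⟨hα1, hα2⟩ := hα
  have hrad : 0 ≤ 16 * α - 16 * α ^ 2 - 2 := by
    nlinarith [Real.sqrt_nonneg 2]
  have h33 := Real.sq_sqrt hrad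
  have main := abstract_main _ _ _ _ _ _ ⟨EuclideanSpace.single (0 : Fin 3) (1 : ℝ), by simp⟩
    (key false false) (key false true) (key true false) (key true true)
    (hbn false) (hbn true) (√(16 * α - 16 * α ^ 2 - 2) / √2) (√2 * (2 * α - 1))
    (by positivity) (mul_nonneg (Real.sqrt_nonneg _) (by linarith))
    (by rw [div_pow, mul_pow, h22, h33]; ring)
    _ _ hu hv
    (by
      have e : 2 * √2 * (1 + √(16 * α - 16 * α ^ 2 - 2) / √2)
          = 2 * √2 + 2 * √(16 * α - 16 * α ^ 2 - 2) := by field_simp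
      rw [e]
      simp only [inner_add_right, inner_sub_right, real_inner_comm _ (bl (ρ _))] at hAC ⊢
      linarith)
    (by
      have e : 2 * √2 * (√2 * (2 * α - 1)) = 8 * α - 4 := by
        linear_combination (2 * (2 * α - 1)) * h22
      rw [e]
      simp only [inner_add_right, inner_sub_right, real_inner_comm _ (bl (ρ _))] at hAB ⊢
      linarith)
  obtain ⟨P1, P2⟩ := hu' main.1
  obtain ⟨P3, P4⟩ := hv' main.2
  intro x
  refine ⟨?_, (hρ x).2⟩
  rcases x with ⟨_ | _, _ | _⟩
  · exact P1
  · exact P3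
  · exact P4
  · exact P2

end
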